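/- arXiv:2207.10161 — 7 statements merged into one kernel-verified Lean document; each statement's English description precedes it below -/
import Mathlib

section
/- Let 0 < α ≤ 2 and let ξ = (ξ₁,ξ₂) ∈ ℝ² satisfy s(ξ) > 0. Then the determinant of the Hessian matrix of w_α at ξ factors as det D²w_α(ξ) = (α²·(cos ξ₁ + cos ξ₂ − 2)/(128·s(ξ)^{4−α})) · (α·cos ξ₁·cos ξ₂·(cos ξ₁ + cos ξ₂) − 4·cos ξ₁·cos ξ₂ + (2−α)(cos ξ₁ + cos ξ₂)); that is, det D²w_α(ξ) = h̃(ξ,α)·h(cos ξ₁, cos ξ₂, α) where h̃(ξ,α) = α²(cos ξ₁ + cos ξ₂ − 2)/(128·s(ξ)^{4−α}). -/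
open Real

/-! The function is `w = φ (f ξ₁ + g ξ₂)` with `φ t = t ^ (α / 2)` and `f x = g x = sin² (x / 2)`.
In the Hessian determinant of any such composition the terms `φ''² f'² g'²` cancel, which leaves
`φ' (φ' f'' g'' + φ'' (f'² g'' + f'' g'²))`. Here `f' = sin / 2` and `f'' = cos / 2`, so
`s = (2 - cos ξ₁ - cos ξ₂) / 2` and `sin² = 1 - cos²` turn the bracket into a polynomial in
`cos ξ₁` and `cos ξ₂`. -/

section Hessian

open Filter Topology

variable {𝕜 : Type*} [NontriviallyNormedField 𝕜]

/-- The Hessian matrix at `(x, y)` of a function `u` of two scalar variables, given in curried form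
and with iterated one-variable derivatives as entries. -/
noncomputable def hessian (u : 𝕜 → 𝕜 → 𝕜) (x y : 𝕜) : Matrix (Fin 2) (Fin 2) 𝕜 :=
  !![deriv (fun x₁ => deriv (fun x₂ => u x₂ y) x₁) x,
      deriv (fun x₁ => deriv (fun y₁ => u x₁ y₁) y) x;
    deriv (fun y₁ => deriv (fun x₁ => u x₁ y₁) x) y,
      deriv (fun y₁ => deriv (fun y₂ => u x y₂) y₁) y]

variable {φ f g : 𝕜 → 𝕜} {x y : 𝕜}

lemma deriv_deriv_comp (hφ : ContDiffAt 𝕜 2 φ (f x)) (hf : ContDiffAt 𝕜 2 f x) :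
    deriv (deriv fun x => φ (f x)) x =
      deriv (deriv φ) (f x) * deriv f x ^ 2 + deriv φ (f x) * deriv (deriv f) x := by
  simpa only [iteratedDeriv_eq_iterate] using! iteratedDeriv_comp_two hφ hf

lemma deriv_deriv_comp_add_const {c : 𝕜} (hφ : ContDiffAt 𝕜 2 φ (f x + c))
    (hf : ContDiffAt 𝕜 2 f x) :
    deriv (deriv fun x => φ (f x + c)) x =
      deriv (deriv φ) (f x + c) * deriv f x ^ 2 + deriv φ (f x + c) * deriv (deriv f) x := by
  simpa only [deriv_add_const'] using
    deriv_deriv_comp (f := fun x => f x + c) hφ (hf.add contDiffAt_const)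

lemma mixed_deriv_comp_add (hφ : ContDiffAt 𝕜 2 φ (f x + g y)) (hf : DifferentiableAt 𝕜 f x)
    (hg : DifferentiableAt 𝕜 g y) :
    deriv (fun x => deriv (fun y => φ (f x + g y)) y) x =
      deriv (deriv φ) (f x + g y) * deriv f x * deriv g y := by
  have hφ_near : ∀ᶠ x' in 𝓝 x, DifferentiableAt 𝕜 φ (f x' + g y) :=
    (hf.continuousAt.add_const (g y)).eventually <|
      (hφ.eventually (by simp)).mono fun _ h => h.differentiableAt two_ne_zero
  have h_inner : (fun x' => deriv (fun y => φ (f x' + g y)) y) =ᶠ[𝓝 x]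
      fun x' => deriv φ (f x' + g y) * deriv g y := by
    filter_upwards [hφ_near] with x' hx'
    exact (hx'.hasDerivAt.comp y (hg.hasDerivAt.const_add (f x'))).deriv
  have hφ' : DifferentiableAt 𝕜 (deriv φ) (f x + g y) :=
    (hφ.derivWithin (m := 1) (by norm_num)).differentiableAt one_ne_zero
  rw [h_inner.deriv_eq]
  exact ((hφ'.hasDerivAt.comp x (hf.hasDerivAt.add_const (g y))).mul_const (deriv g y)).deriv

theorem det_hessian_comp_add (hφ : ContDiffAt 𝕜 2 φ (f x + g y)) (hf : ContDiffAt 𝕜 2 f x)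
    (hg : ContDiffAt 𝕜 2 g y) :
    (hessian (fun x y => φ (f x + g y)) x y).det =
      deriv φ (f x + g y) * (deriv φ (f x + g y) * (deriv (deriv f) x * deriv (deriv g) y) +
        deriv (deriv φ) (f x + g y) *
          (deriv f x ^ 2 * deriv (deriv g) y + deriv (deriv f) x * deriv g y ^ 2)) := by
  have hf' := hf.differentiableAt two_ne_zero
  have hg' := hg.differentiableAt two_ne_zero
  have hxx := deriv_deriv_comp_add_const hφ hf
  have hxy := mixed_deriv_comp_add hφ hf' hg'
  rw [add_comm] at hφ
  have hyy := deriv_deriv_comp_add_const hφ hg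
  have hyx := mixed_deriv_comp_add hφ hg' hf'
  simp only [add_comm (g _)] at hyy hyx
  rw [hessian, Matrix.det_fin_two_of, hxx, hyy, hxy, hyx]
  ring

end Hessian

lemma deriv_deriv_rpow_const (q t : ℝ) :
    deriv (deriv fun t : ℝ => t ^ q) t = q * (q - 1) * t ^ (q - 2) := by
  rw [deriv_rpow_const', deriv_const_mul_field, Real.deriv_rpow_const, ← mul_assoc, sub_sub,
    one_add_one_eq_two]

theorem det_hessian_rpow_add {f g : ℝ → ℝ} {x y : ℝ} (q : ℝ) (h : 0 < f x + g y)
    (hf : ContDiffAt ℝ 2 f x) (hg : ContDiffAt ℝ 2 g y) :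
    (hessian (fun x y => (f x + g y) ^ q) x y).det =
      q ^ 2 * (f x + g y) ^ (2 * q - 3) *
        ((f x + g y) * (deriv (deriv f) x * deriv (deriv g) y) +
          (q - 1) * (deriv f x ^ 2 * deriv (deriv g) y + deriv (deriv f) x * deriv g y ^ 2)) := by
  rw [det_hessian_comp_add (contDiffAt_rpow_const_of_ne h.ne') hf hg, Real.deriv_rpow_const,
    deriv_deriv_rpow_const]
  have h_pow₁ : (f x + g y) ^ (q - 1) = (f x + g y) ^ (q - 2) * (f x + g y) := by
    rw [← rpow_add_one h.ne']
    congr 1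
    ring
  have h_pow₂ : (f x + g y) ^ (2 * q - 3) = ((f x + g y) ^ (q - 2)) ^ 2 * (f x + g y) := by
    rw [sq, ← rpow_add h, ← rpow_add_one h.ne']
    congr 1
    ring
  rw [h_pow₁, h_pow₂]
  ring

lemma sin_half_sq (x : ℝ) : sin (x / 2) ^ 2 = (1 - cos x) / 2 := by
  rw [sin_sq_eq_half_sub, mul_div_cancel₀ x two_ne_zero, sub_div]

lemma deriv_sin_half_sq : deriv (fun x => sin (x / 2) ^ 2) = fun x => sin x / 2 := by
  funext x
  simp [sin_half_sq]

theorem stmt3_general (α : ℝ) {x y : ℝ} (h : 0 < sin (x / 2) ^ 2 + sin (y / 2) ^ 2) :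
    (hessian (fun x y => (sin (x / 2) ^ 2 + sin (y / 2) ^ 2) ^ (α / 2)) x y).det =
      α ^ 2 * (cos x + cos y - 2) / (128 * (sin (x / 2) ^ 2 + sin (y / 2) ^ 2) ^ (4 - α)) *
        (α * cos x * cos y * (cos x + cos y) - 4 * (cos x * cos y)
          + (2 - α) * (cos x + cos y)) := by
  have h_smooth : ContDiff ℝ 2 fun x => sin (x / 2) ^ 2 := by fun_prop
  rw [det_hessian_rpow_add (f := fun x => sin (x / 2) ^ 2) (g := fun y => sin (y / 2) ^ 2)
    (α / 2) h h_smooth.contDiffAt h_smooth.contDiffAt]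
  simp only [deriv_sin_half_sq, deriv_div_const, Real.deriv_sin]
  set S := sin (x / 2) ^ 2 + sin (y / 2) ^ 2 with hS
  have hS_cos : S = (2 - cos x - cos y) / 2 := by
    rw [hS, sin_half_sq, sin_half_sq]
    ring
  have h_pow : S ^ (2 * (α / 2) - 3) = S / S ^ (4 - α) := by
    rw [eq_div_iff (rpow_pos_of_pos h _).ne', ← rpow_add h,
      show 2 * (α / 2) - 3 + (4 - α) = 1 by ring, rpow_one]
  have h_bracket : S * (cos x / 2 * (cos y / 2)) +
      (α / 2 - 1) * ((sin x / 2) ^ 2 * (cos y / 2) + cos x / 2 * (sin y / 2) ^ 2) =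
      -(α * cos x * cos y * (cos x + cos y) - 4 * (cos x * cos y)
        + (2 - α) * (cos x + cos y)) / 16 := by
    rw [div_pow, div_pow, sin_sq x, sin_sq y, hS_cos]
    ring
  have h_factor : cos x + cos y - 2 = -2 * S := by linarith
  rw [h_pow, h_bracket, h_factor]
  ring

/-- For `0 < α ≤ 2` and `ξ = (ξ₁,ξ₂)` with `s ξ > 0`, the determinant of
the Hessian matrix of `w_α = s^(α/2)` at `ξ` factors as
`h̃(ξ,α) · h(cos ξ₁, cos ξ₂, α)` where `h̃(ξ,α) = α²(cos ξ₁ + cos ξ₂ − 2)/(128·s(ξ)^(4−α))`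
and `h(a,b,α) = α·a·b·(a+b) − 4ab + (2−α)(a+b)`. -/
theorem stmt3 (α : ℝ) (hα1 : 0 < α) (hα2 : α ≤ 2)
    (s : ℝ → ℝ → ℝ) (hs : ∀ x y, s x y = Real.sin (x / 2) ^ 2 + Real.sin (y / 2) ^ 2)
    (w : ℝ → ℝ → ℝ) (hw : ∀ x y, w x y = s x y ^ (α / 2))
    (ξ₁ ξ₂ : ℝ) (hξ : 0 < s ξ₁ ξ₂) :
    deriv (fun x => deriv (fun x' => w x' ξ₂) x) ξ₁ *
        deriv (fun y => deriv (fun y' => w ξ₁ y') y) ξ₂ -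
      deriv (fun x => deriv (fun y => w x y) ξ₂) ξ₁ *
        deriv (fun y => deriv (fun x => w x y) ξ₁) ξ₂
      = α ^ 2 * (Real.cos ξ₁ + Real.cos ξ₂ - 2) / (128 * s ξ₁ ξ₂ ^ (4 - α)) *
          (α * Real.cos ξ₁ * Real.cos ξ₂ * (Real.cos ξ₁ + Real.cos ξ₂)
            - 4 * (Real.cos ξ₁ * Real.cos ξ₂) + (2 - α) * (Real.cos ξ₁ + Real.cos ξ₂)) := by
  simp only [hw, hs] at hξ ⊢
  rw [← stmt3_general α hξ, hessian, Matrix.det_fin_two_of]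
end

section
/- Let 1 < α < 2. For every ξ ∈ [−π,π]² with ξ ≠ (0,0), the Hessian matrix D²w_α(ξ) (which is well defined since s(ξ) > 0 at such points) is not the zero matrix. -/
open Real

/-!
For `F (x, y) = (f x + g y) ^ p`, the mixed derivative is `p (p - 1) f' g' (f + g) ^ (p - 2)`, so
where it vanishes (with `p ≠ 0, 1` and `f + g > 0`) one of `f'`, `g'` does, say `f'`. There `F_xx`
reduces to `p f'' (f + g) ^ (p - 1)`, so a zero Hessian forces `f' = f'' = 0`. For
`f x = sin (x / 2) ^ 2` these derivatives are `sin x / 2` and `cos x / 2`, which never vanish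
together.
-/

open Filter Topology

section SeparableSum

variable {f f' g g' : ℝ → ℝ} {a b f'' g'' p x y : ℝ}

lemma deriv_deriv_rpow_const_s4 (hf : ∀ᶠ t in 𝓝 x, HasDerivAt f (f' t) t)
    (hf' : HasDerivAt f' f'' x) (hx : f x ≠ 0) :
    deriv (fun t => deriv (fun u => f u ^ p) t) x =
      f'' * p * f x ^ (p - 1) + f' x * p * (f' x * (p - 1) * f x ^ (p - 1 - 1)) := by
  have hfx : HasDerivAt f (f' x) x := hf.self_of_nhds
  have hderiv : (fun t => deriv (fun u => f u ^ p) t) =ᶠ[𝓝 x]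
      fun t => f' t * p * f t ^ (p - 1) := by
    filter_upwards [hf, hfx.continuousAt.eventually_ne hx] with t ht ht0
    exact (ht.rpow_const (Or.inl ht0)).deriv
  rw [hderiv.deriv_eq]
  exact ((hf'.mul_const p).mul (hfx.rpow_const (Or.inl hx))).deriv

lemma deriv_deriv_add_rpow_const (hf : HasDerivAt f a x) (hg : HasDerivAt g b y)
    (h : f x + g y ≠ 0) :
    deriv (fun t => deriv (fun u => (f t + g u) ^ p) y) x =
      b * p * (a * (p - 1) * (f x + g y) ^ (p - 1 - 1)) := by
  have hfg : HasDerivAt (fun t => f t + g y) a x := hf.add_const _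
  have hderiv : (fun t => deriv (fun u => (f t + g u) ^ p) y) =ᶠ[𝓝 x]
      fun t => b * p * (f t + g y) ^ (p - 1) := by
    filter_upwards [hfg.continuousAt.eventually_ne h] with t ht
    exact ((hg.const_add (f t)).rpow_const (Or.inl ht)).deriv
  rw [hderiv.deriv_eq]
  exact ((hfg.rpow_const (Or.inl h)).const_mul (b * p)).deriv

lemma deriv_deriv_rpow_const_ne_zero (hf : ∀ᶠ t in 𝓝 x, HasDerivAt f (f' t) t)
    (hf' : HasDerivAt f' f'' x) (hx : 0 < f x) (hp : p ≠ 0) (hcrit : f' x = 0) (hf'' : f'' ≠ 0) :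
    deriv (fun t => deriv (fun u => f u ^ p) t) x ≠ 0 := by
  have hpow : f x ^ (p - 1) ≠ 0 := (rpow_pos_of_pos hx _).ne'
  simp [deriv_deriv_rpow_const_s4 hf hf' hx.ne', hcrit, hf'', hp, hpow]

lemma deriv_deriv_add_rpow_const_eq_zero_iff (hf : HasDerivAt f a x) (hg : HasDerivAt g b y)
    (h : 0 < f x + g y) (hp0 : p ≠ 0) (hp1 : p ≠ 1) :
    deriv (fun t => deriv (fun u => (f t + g u) ^ p) y) x = 0 ↔ a = 0 ∨ b = 0 := by
  have hpow : (f x + g y) ^ (p - 1 - 1) ≠ 0 := (rpow_pos_of_pos h _).ne'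
  simp [deriv_deriv_add_rpow_const hf hg h.ne', hp0, sub_ne_zero.mpr hp1, hpow, or_comm]

theorem not_hessian_add_rpow_const_eq_zero
    (hf : ∀ᶠ t in 𝓝 x, HasDerivAt f (f' t) t) (hf' : HasDerivAt f' f'' x)
    (hg : ∀ᶠ t in 𝓝 y, HasDerivAt g (g' t) t) (hg' : HasDerivAt g' g'' y)
    (hpos : 0 < f x + g y) (hp0 : p ≠ 0) (hp1 : p ≠ 1)
    (hfx : f' x = 0 → f'' ≠ 0) (hgy : g' y = 0 → g'' ≠ 0) :
    ¬ (deriv (fun t => deriv (fun u => (f u + g y) ^ p) t) x = 0 ∧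
        deriv (fun t => deriv (fun u => (f t + g u) ^ p) y) x = 0 ∧
        deriv (fun t => deriv (fun u => (f x + g u) ^ p) t) y = 0) := by
  rintro ⟨hxx, hxy, hyy⟩
  rcases (deriv_deriv_add_rpow_const_eq_zero_iff hf.self_of_nhds hg.self_of_nhds hpos hp0 hp1).mp
    hxy with hcrit | hcrit
  · exact deriv_deriv_rpow_const_ne_zero (hf.mono fun _ ht => ht.add_const (g y)) hf' hpos hp0
      hcrit (hfx hcrit) hxx
  · exact deriv_deriv_rpow_const_ne_zero (hg.mono fun _ ht => ht.const_add (f x)) hg' hpos hp0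
      hcrit (hgy hcrit) hyy

end SeparableSum

section SinHalfSq

variable {x y : ℝ}

lemma hasDerivAt_sin_half_sq (x : ℝ) : HasDerivAt (fun t => sin (t / 2) ^ 2) (sin x / 2) x := by
  have hsin : sin x = 2 * sin (x / 2) * cos (x / 2) := by
    rw [← sin_two_mul, mul_div_cancel₀ x two_ne_zero]
  refine ((((hasDerivAt_id x).div_const 2).sin).pow 2).congr_deriv ?_
  simp only [id, hsin]
  ring

lemma cos_ne_zero_of_sin_eq_zero (h : sin x = 0) : cos x ≠ 0 := by
  intro hcos
  simpa [h, hcos] using sin_sq_add_cos_sq x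

lemma sin_half_eq_zero_iff (hx : x ∈ Set.Ioo (-(2 * π)) (2 * π)) : sin (x / 2) = 0 ↔ x = 0 := by
  rw [sin_eq_zero_iff_of_lt_of_lt (by linarith [hx.1]) (by linarith [hx.2])]
  simp

lemma sin_half_sq_add_sin_half_sq_eq_zero_iff (hx : x ∈ Set.Ioo (-(2 * π)) (2 * π))
    (hy : y ∈ Set.Ioo (-(2 * π)) (2 * π)) :
    sin (x / 2) ^ 2 + sin (y / 2) ^ 2 = 0 ↔ (x, y) = (0, 0) := by
  rw [add_eq_zero_iff_of_nonneg (sq_nonneg _) (sq_nonneg _), sq_eq_zero_iff, sq_eq_zero_iff,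
    sin_half_eq_zero_iff hx, sin_half_eq_zero_iff hy, Prod.mk.injEq]

lemma Icc_neg_pi_pi_subset_Ioo : Set.Icc (-π) π ⊆ Set.Ioo (-(2 * π)) (2 * π) :=
  Set.Icc_subset_Ioo (by linarith [pi_pos]) (by linarith [pi_pos])

end SinHalfSq

theorem stmt4_general (α : ℝ) (hα0 : α ≠ 0) (hα2 : α ≠ 2)
    (s : ℝ → ℝ → ℝ) (hs : ∀ x y, s x y = sin (x / 2) ^ 2 + sin (y / 2) ^ 2)
    (w : ℝ → ℝ → ℝ) (hw : ∀ x y, w x y = s x y ^ (α / 2))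
    (ξ₁ ξ₂ : ℝ) (hξ : s ξ₁ ξ₂ ≠ 0) :
    ¬ (deriv (fun x => deriv (fun x' => w x' ξ₂) x) ξ₁ = 0 ∧
        deriv (fun x => deriv (fun y => w x y) ξ₂) ξ₁ = 0 ∧
        deriv (fun y => deriv (fun y' => w ξ₁ y') y) ξ₂ = 0) := by
  simp only [hw, hs] at hξ ⊢
  have hpos : 0 < sin (ξ₁ / 2) ^ 2 + sin (ξ₂ / 2) ^ 2 := lt_of_le_of_ne (by positivity) hξ.symm
  have hderiv₂ (x : ℝ) : HasDerivAt (fun t => sin t / 2) (cos x / 2) x :=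
    (hasDerivAt_sin x).div_const 2
  have hnondegenerate (x : ℝ) (hcrit : sin x / 2 = 0) : cos x / 2 ≠ 0 :=
    div_ne_zero (cos_ne_zero_of_sin_eq_zero (by linarith)) two_ne_zero
  exact not_hessian_add_rpow_const_eq_zero (.of_forall hasDerivAt_sin_half_sq) (hderiv₂ ξ₁)
    (.of_forall hasDerivAt_sin_half_sq) (hderiv₂ ξ₂) hpos (div_ne_zero hα0 two_ne_zero)
    (fun h => hα2 (by linarith)) (hnondegenerate ξ₁) (hnondegenerate ξ₂)

/-- For `1 < α < 2` and every `ξ ∈ [−π,π]²` with `ξ ≠ (0,0)`, the Hessian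
matrix of `w_α = s^(α/2)` at `ξ` is not the zero matrix, i.e. not all four second-order
partial derivatives vanish. -/
theorem stmt4 (α : ℝ) (hα1 : 1 < α) (hα2 : α < 2)
    (s : ℝ → ℝ → ℝ) (hs : ∀ x y, s x y = Real.sin (x / 2) ^ 2 + Real.sin (y / 2) ^ 2)
    (w : ℝ → ℝ → ℝ) (hw : ∀ x y, w x y = s x y ^ (α / 2))
    (ξ₁ ξ₂ : ℝ) (h1 : ξ₁ ∈ Set.Icc (-π) π) (h2 : ξ₂ ∈ Set.Icc (-π) π)
    (hne : (ξ₁, ξ₂) ≠ ((0 : ℝ), (0 : ℝ))) :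
    ¬ (deriv (fun x => deriv (fun x' => w x' ξ₂) x) ξ₁ = 0 ∧
        deriv (fun x => deriv (fun y => w x y) ξ₂) ξ₁ = 0 ∧
        deriv (fun y => deriv (fun x => w x y) ξ₁) ξ₂ = 0 ∧
        deriv (fun y => deriv (fun y' => w ξ₁ y') y) ξ₂ = 0) := fun ⟨hxx, hxy, _, hyy⟩ =>
  stmt4_general α (by linarith) hα2.ne s hs w hw ξ₁ ξ₂
    (by rwa [hs, Ne, sin_half_sq_add_sin_half_sq_eq_zero_iff (Icc_neg_pi_pi_subset_Ioo h1)
      (Icc_neg_pi_pi_subset_Ioo h2)]) ⟨hxx, hxy, hyy⟩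
end

section
/- Let α₁, α₂ ∈ [1,2] with α₁ ≠ α₂. If (a,b) ∈ [−1,1) × [−1,1) satisfies both h(a,b,α₁) = 0 and h(a,b,α₂) = 0, then (a,b) = (0,0). That is, the zero sets E_{α₁} and E_{α₂} in [−1,1)² intersect exactly in the single point (0,0). -/
/-!
The polynomial `h(a, b, α)` is affine in `α`, with slope `(a + b) * (a * b - 1)` and constant term
`2 * (a + b - 2 * (a * b))`. It vanishes for two values of `α` only if both coefficients do.
Then `a + b = 2 * (a * b)` and either `a + b = 0` or `a * b = 1`; in each case `a` and `b` are the
roots of a perfect square, `X ^ 2` or `(X - 1) ^ 2`.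
-/

theorem mul_add_eq_zero_and_mul_add_eq_zero_iff {R : Type*} [Ring R] [NoZeroDivisors R]
    {s t x y : R} (hst : s ≠ t) :
    s * x + y = 0 ∧ t * x + y = 0 ↔ x = 0 ∧ y = 0 := by
  constructor
  · rintro ⟨hs, ht⟩
    have hslope : s * x = t * x := add_right_cancel (hs.trans ht.symm)
    have hx : x = 0 := (mul_eq_mul_right_iff.mp hslope).resolve_left hst
    exact ⟨hx, by simpa [hx] using hs⟩
  · rintro ⟨rfl, rfl⟩
    simp

theorem add_eq_two_mul_and_mul_eq_sq_iff {R : Type*} [CommRing R] [IsReduced R] {a b c : R} :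
    a + b = 2 * c ∧ a * b = c ^ 2 ↔ a = c ∧ b = c := by
  constructor
  · rintro ⟨hsum, hprod⟩
    have hsq : (a - c) ^ 2 = 0 := by linear_combination a * hsum - hprod
    have ha : a = c := sub_eq_zero.mp (eq_zero_of_pow_eq_zero hsq)
    exact ⟨ha, by linear_combination hsum - ha⟩
  · rintro ⟨rfl, rfl⟩
    exact ⟨(two_mul _).symm, (sq _).symm⟩

/-- The polynomial `h(a, b, α)`, the essential factor of the Hessian determinant of the symbol
`w_α` in the variables `a = cos ξ₁` and `b = cos ξ₂`; its zero set describes the degenerate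
frequencies. It is taken over an arbitrary commutative ring. -/
def degeneracyFactor {R : Type*} [CommRing R] (a b α : R) : R :=
  α * a * b * (a + b) - 4 * (a * b) + (2 - α) * (a + b)

section DegeneracyFactor

variable {R : Type*} [CommRing R]

theorem degeneracyFactor_eq_mul_add (a b α : R) :
    degeneracyFactor a b α = α * ((a + b) * (a * b - 1)) + 2 * (a + b - 2 * (a * b)) := by
  unfold degeneracyFactor
  ring

variable [NoZeroDivisors R] [NeZero (2 : R)] {a b α₁ α₂ : R}

theorem degeneracyFactor_eq_zero_and_eq_zero_iff (hne : α₁ ≠ α₂) :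
    degeneracyFactor a b α₁ = 0 ∧ degeneracyFactor a b α₂ = 0 ↔
      (a + b = 0 ∨ a * b = 1) ∧ a + b = 2 * (a * b) := by
  simp only [degeneracyFactor_eq_mul_add, mul_add_eq_zero_and_mul_add_eq_zero_iff hne,
    mul_eq_zero, sub_eq_zero, two_ne_zero, false_or]

theorem stmt6_general (hne : α₁ ≠ α₂) :
    degeneracyFactor a b α₁ = 0 ∧ degeneracyFactor a b α₂ = 0 ↔
      (a = 0 ∧ b = 0) ∨ (a = 1 ∧ b = 1) := by
  rw [degeneracyFactor_eq_zero_and_eq_zero_iff hne, or_and_right,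
    ← add_eq_two_mul_and_mul_eq_sq_iff, ← add_eq_two_mul_and_mul_eq_sq_iff]
  have hzero : a + b = 0 ∧ a + b = 2 * (a * b) ↔ a + b = 2 * 0 ∧ a * b = 0 ^ 2 := by
    rw [mul_zero, zero_pow two_ne_zero]
    exact and_congr_right fun hsum ↦ by rw [hsum, zero_eq_mul, or_iff_right two_ne_zero]
  have hone : a * b = 1 ∧ a + b = 2 * (a * b) ↔ a + b = 2 * 1 ∧ a * b = 1 ^ 2 := by
    rw [and_comm, one_pow]
    exact and_congr_left fun hprod ↦ by rw [hprod]
  exact or_congr hzero hone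

end DegeneracyFactor

/-- For `α₁, α₂ ∈ [1,2]` with `α₁ ≠ α₂`, if `(a,b) ∈ [−1,1)²` is a common
zero of `h(·,·,α₁)` and `h(·,·,α₂)`, where `h(a,b,α) = α·a·b·(a+b) − 4ab + (2−α)(a+b)`,
then `(a,b) = (0,0)`. -/
theorem stmt6 (α₁ α₂ : ℝ) (hα₁ : α₁ ∈ Set.Icc (1 : ℝ) 2) (hα₂ : α₂ ∈ Set.Icc (1 : ℝ) 2)
    (hne : α₁ ≠ α₂)
    (h : ℝ → ℝ → ℝ → ℝ)
    (hh : ∀ a b α, h a b α = α * a * b * (a + b) - 4 * (a * b) + (2 - α) * (a + b))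
    (a b : ℝ) (ha : a ∈ Set.Ico (-1 : ℝ) 1) (hb : b ∈ Set.Ico (-1 : ℝ) 1)
    (h1 : h a b α₁ = 0) (h2 : h a b α₂ = 0) :
    a = 0 ∧ b = 0 :=
  ((stmt6_general hne).mp ⟨(hh a b α₁).symm.trans h1, (hh a b α₂).symm.trans h2⟩).resolve_right
    fun hone ↦ ha.2.ne hone.1
end

section
/- Let 0 < α < 2 and define F : ℝ² → ℝ by F(x,y) = w_α(π/2 + (x−y)/√2, π/2 + (x+y)/√2), i.e. the symbol w_α expressed in the rotated coordinates diagonalizing its Hessian at the cusp point (π/2, π/2). Then: (i) F(0,y) = 1 for all y ∈ ℝ (so every pure y-derivative of F of order ≥ 1 vanishes at the origin); (ii) ∂²_x F(0,0) = −α(2−α)/8 and ∂_x∂_y F(0,0) = 0; (iii) ∂³_x F(0,0) = α(α² − 6α + 4)/(16√2), ∂²_x∂_y F(0,0) = 0, and ∂_x∂²_y F(0,0) = −α/(4√2). -/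
/-!
Angle addition gives `F(x, y) = g (sin (x / √2) * cos (y / √2))` with `g u = (1 + u) ^ (α / 2)`.
Hence `F(0, ·)` is constant, every `F(x, ·)` is even, and Faà di Bruno's formula expresses the
remaining derivatives of `F` at the origin through those of `g` at `0`.
-/

open Real

open Filter

open scoped ContDiff Topology

theorem sin_sq_half_add_sin_sq_half_pi_div_two (u v : ℝ) :
    sin ((π / 2 + (u - v)) / 2) ^ 2 + sin ((π / 2 + (u + v)) / 2) ^ 2 = 1 + sin u * cos v := by
  rw [sin_sq_eq_half_sub, sin_sq_eq_half_sub, mul_div_cancel₀ _ two_ne_zero,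
    mul_div_cancel₀ _ two_ne_zero, add_comm, add_comm (π / 2), cos_add_pi_div_two,
    add_comm (π / 2), cos_add_pi_div_two, sin_add, sin_sub]
  ring

theorem deriv_zero_of_even {𝕜 E : Type*} [NontriviallyNormedField 𝕜] [CharZero 𝕜]
    [NormedAddCommGroup E] [NormedSpace 𝕜 E] {f : 𝕜 → E} (hf : f.Even) : deriv f 0 = 0 := by
  have : IsAddTorsionFree E := .of_isTorsionFree 𝕜 E
  have h := deriv_comp_neg f 0
  rwa [funext hf, neg_zero, self_eq_neg] at h

section Trigonometric

variable {g : ℝ → ℝ} (a b : ℝ)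

theorem iteratedDeriv_sin_const_mul_zero (n : ℕ) :
    iteratedDeriv n (fun x => sin (a * x)) 0 = a ^ n * iteratedDeriv n sin 0 := by
  simp only [iteratedDeriv_comp_const_mul contDiff_sin, mul_zero]

theorem hasDerivAt_sin_const_mul_zero : HasDerivAt (fun x => sin (a * x)) a 0 := by
  simpa using ((hasDerivAt_id 0).const_mul a).sin

theorem iteratedDeriv_two_comp_sin_const_mul_zero (hg : ContDiffAt ℝ 2 g 0) :
    iteratedDeriv 2 (fun x => g (sin (a * x))) 0 = a ^ 2 * iteratedDeriv 2 g 0 := by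
  have hsin_two : iteratedDeriv 2 (fun x => sin (a * x)) 0 = 0 := by
    simp [iteratedDeriv_sin_const_mul_zero]
  have hcomp := iteratedDeriv_comp_two (f := fun x => sin (a * x)) (x := 0)
    (by simpa using hg) (by fun_prop)
  rw [hsin_two, (hasDerivAt_sin_const_mul_zero a).deriv, mul_zero, mul_zero, add_zero,
    sin_zero] at hcomp
  exact hcomp.trans (mul_comm _ _)

theorem iteratedDeriv_three_comp_sin_const_mul_zero (hg : ContDiffAt ℝ 3 g 0) :
    iteratedDeriv 3 (fun x => g (sin (a * x))) 0 =
      a ^ 3 * (iteratedDeriv 3 g 0 - deriv g 0) := by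
  have hsin_two : iteratedDeriv 2 (fun x => sin (a * x)) 0 = 0 := by
    simp [iteratedDeriv_sin_const_mul_zero]
  have hsin_three : iteratedDeriv 3 (fun x => sin (a * x)) 0 = -a ^ 3 := by
    simp [iteratedDeriv_sin_const_mul_zero]
  have hcomp := iteratedDeriv_comp_three (f := fun x => sin (a * x)) (x := 0)
    (by simpa using hg) (by fun_prop)
  rw [hsin_two, hsin_three, (hasDerivAt_sin_const_mul_zero a).deriv, mul_zero, sin_zero] at hcomp
  exact hcomp.trans (by ring)

theorem iteratedDeriv_two_comp_mul_cos_const_mul_zero {s : ℝ} (hg : ContDiffAt ℝ 2 g s) :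
    iteratedDeriv 2 (fun y => g (s * cos (b * y))) 0 = -(b ^ 2 * s * deriv g s) := by
  have hcos_one : deriv (fun y => s * cos (b * y)) 0 = 0 :=
    deriv_zero_of_even fun y => by rw [mul_neg, cos_neg]
  have hcos_two : iteratedDeriv 2 (fun y => s * cos (b * y)) 0 = -(b ^ 2 * s) := by
    rw [iteratedDeriv_const_mul_field, iteratedDeriv_comp_const_mul contDiff_cos]
    simp [mul_comm s]
  have hcomp := iteratedDeriv_comp_two (f := fun y => s * cos (b * y)) (x := 0)
    (by simpa using hg) (by fun_prop)
  rw [hcos_one, hcos_two, mul_zero, cos_zero, mul_one] at hcomp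
  exact hcomp.trans (by ring)

theorem deriv_iteratedDeriv_two_comp_sin_mul_cos_zero (hg : ContDiffAt ℝ 2 g 0) :
    deriv (fun x => iteratedDeriv 2 (fun y => g (sin (a * x) * cos (b * y))) 0) 0 =
      -(a * b ^ 2 * deriv g 0) := by
  have hsin : Tendsto (fun x => sin (a * x)) (𝓝 0) (𝓝 0) :=
    Continuous.tendsto' (by fun_prop) _ _ (by simp)
  have hsecond : (fun x => iteratedDeriv 2 (fun y => g (sin (a * x) * cos (b * y))) 0) =ᶠ[𝓝 0]
      fun x => -(b ^ 2 * sin (a * x) * deriv g (sin (a * x))) :=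
    (hsin.eventually (hg.eventually (by simp))).mono fun x hx =>
      iteratedDeriv_two_comp_mul_cos_const_mul_zero b hx
  have hdiff : DifferentiableAt ℝ (deriv g) 0 :=
    (hg.derivWithin (m := 1) (by norm_num)).differentiableAt one_ne_zero
  have hinner : HasDerivAt (fun s => -(b ^ 2 * s * deriv g s)) (-(b ^ 2 * deriv g 0)) 0 := by
    simpa using (((hasDerivAt_id 0).const_mul (b ^ 2)).fun_mul hdiff.hasDerivAt).fun_neg
  have hcomp := hinner.comp_of_eq 0 (hasDerivAt_sin_const_mul_zero a) (by simp)
  exact hsecond.deriv_eq.trans (hcomp.deriv.trans (by ring))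

end Trigonometric

section OneAddRpow

variable (p : ℝ)

theorem contDiffAt_one_add_rpow {x : ℝ} (hx : 1 + x ≠ 0) (n : ℕ∞ω) :
    ContDiffAt ℝ n (fun u : ℝ => (1 + u) ^ p) x :=
  (contDiffAt_const.add contDiffAt_id).rpow_const_of_ne hx

theorem iteratedDeriv_one_add_rpow_zero (n : ℕ) :
    iteratedDeriv n (fun u : ℝ => (1 + u) ^ p) 0 = (descPochhammer ℝ n).eval p := by
  rw [iteratedDeriv_comp_const_add n (fun u : ℝ => u ^ p), iteratedDeriv_eq_iterate]
  simp only [iter_deriv_rpow_const, add_zero, one_rpow, mul_one]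

theorem deriv_one_add_rpow_zero : deriv (fun u : ℝ => (1 + u) ^ p) 0 = p := by
  simpa using iteratedDeriv_one_add_rpow_zero p 1

variable (a b : ℝ)

theorem iteratedDeriv_two_one_add_sin_rpow_zero :
    iteratedDeriv 2 (fun x => (1 + sin (a * x)) ^ p) 0 = a ^ 2 * (p * (p - 1)) := by
  rw [iteratedDeriv_two_comp_sin_const_mul_zero a (contDiffAt_one_add_rpow p (by simp) 2),
    iteratedDeriv_one_add_rpow_zero]
  simp [descPochhammer_succ_eval]

theorem iteratedDeriv_three_one_add_sin_rpow_zero :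
    iteratedDeriv 3 (fun x => (1 + sin (a * x)) ^ p) 0 =
      a ^ 3 * (p * (p - 1) * (p - 2) - p) := by
  rw [iteratedDeriv_three_comp_sin_const_mul_zero a (contDiffAt_one_add_rpow p (by simp) 3),
    iteratedDeriv_one_add_rpow_zero, deriv_one_add_rpow_zero]
  simp [descPochhammer_succ_eval]

theorem deriv_iteratedDeriv_two_one_add_sin_mul_cos_rpow_zero :
    deriv (fun x => iteratedDeriv 2 (fun y => (1 + sin (a * x) * cos (b * y)) ^ p) 0) 0 =
      -(a * b ^ 2 * p) := by
  rw [deriv_iteratedDeriv_two_comp_sin_mul_cos_zero a b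
    (contDiffAt_one_add_rpow p (by simp) 2), deriv_one_add_rpow_zero]

end OneAddRpow

theorem stmt8_general (α : ℝ)
    (w : ℝ → ℝ → ℝ)
    (hw : ∀ x y, w x y = (Real.sin (x / 2) ^ 2 + Real.sin (y / 2) ^ 2) ^ (α / 2))
    (F : ℝ → ℝ → ℝ)
    (hF : ∀ x y, F x y = w (π / 2 + (x - y) / Real.sqrt 2) (π / 2 + (x + y) / Real.sqrt 2)) :
    (∀ y, F 0 y = 1) ∧
    (∀ n : ℕ, 1 ≤ n → iteratedDeriv n (fun y => F 0 y) 0 = 0) ∧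
    deriv (deriv (fun x => F x 0)) 0 = -(α * (2 - α) / 8) ∧
    deriv (fun x => deriv (fun y => F x y) 0) 0 = 0 ∧
    deriv (deriv (deriv (fun x => F x 0))) 0 = α * (α ^ 2 - 6 * α + 4) / (16 * Real.sqrt 2) ∧
    deriv (deriv (fun x => deriv (fun y => F x y) 0)) 0 = 0 ∧
    deriv (fun x => deriv (deriv (fun y => F x y)) 0) 0 = -(α / (4 * Real.sqrt 2)) := by
  have hF' (x y : ℝ) : F x y = (1 + sin ((√2)⁻¹ * x) * cos ((√2)⁻¹ * y)) ^ (α / 2) := by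
    rw [hF, hw, sub_div x, add_div x, sin_sq_half_add_sin_sq_half_pi_div_two, div_eq_inv_mul,
      div_eq_inv_mul]
  have hFx0 (x : ℝ) : F x 0 = (1 + sin ((√2)⁻¹ * x)) ^ (α / 2) := by simp [hF']
  have hF0y (y : ℝ) : F 0 y = 1 := by simp [hF']
  have hFy (x : ℝ) : deriv (F x) 0 = 0 := deriv_zero_of_even fun y => by simp [hF']
  have hsq : (√2)⁻¹ ^ 2 = 1 / 2 := by rw [inv_pow, sq_sqrt zero_le_two, one_div]
  have hFxx := iteratedDeriv_two_one_add_sin_rpow_zero (α / 2) (√2)⁻¹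
  have hFxxx := iteratedDeriv_three_one_add_sin_rpow_zero (α / 2) (√2)⁻¹
  have hFxyy := deriv_iteratedDeriv_two_one_add_sin_mul_cos_rpow_zero (α / 2) (√2)⁻¹ (√2)⁻¹
  simp only [← hFx0, ← hF', iteratedDeriv_succ, iteratedDeriv_zero] at hFxx hFxxx hFxyy
  refine ⟨hF0y, fun n hn => ?_, hFxx.trans ?_, ?_, hFxxx.trans ?_, ?_, hFxyy.trans ?_⟩
  · simp only [hF0y, iteratedDeriv_const, Nat.one_le_iff_ne_zero.mp hn, if_false]
  · rw [hsq]; ring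
  · simp only [hFy, deriv_const']
  · rw [pow_succ, hsq]; ring
  · simp only [hFy, deriv_const']
  · rw [hsq]; ring

/-- For `0 < α < 2`, let `F(x,y) = w_α(π/2 + (x−y)/√2, π/2 + (x+y)/√2)` be
the symbol in the rotated coordinates at the cusp `(π/2, π/2)`. Then:
(i) `F(0,y) = 1` for all `y` (so all pure `y`-derivatives of order `≥ 1` vanish at `0`);
(ii) `∂²ₓF(0,0) = −α(2−α)/8` and `∂ₓ∂_y F(0,0) = 0`;
(iii) `∂³ₓF(0,0) = α(α²−6α+4)/(16√2)`, `∂²ₓ∂_y F(0,0) = 0`, `∂ₓ∂²_y F(0,0) = −α/(4√2)`. -/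
theorem stmt8 (α : ℝ) (hα1 : 0 < α) (hα2 : α < 2)
    (w : ℝ → ℝ → ℝ)
    (hw : ∀ x y, w x y = (Real.sin (x / 2) ^ 2 + Real.sin (y / 2) ^ 2) ^ (α / 2))
    (F : ℝ → ℝ → ℝ)
    (hF : ∀ x y, F x y = w (π / 2 + (x - y) / Real.sqrt 2) (π / 2 + (x + y) / Real.sqrt 2)) :
    (∀ y, F 0 y = 1) ∧
    (∀ n : ℕ, 1 ≤ n → iteratedDeriv n (fun y => F 0 y) 0 = 0) ∧
    deriv (deriv (fun x => F x 0)) 0 = -(α * (2 - α) / 8) ∧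
    deriv (fun x => deriv (fun y => F x y) 0) 0 = 0 ∧
    deriv (deriv (deriv (fun x => F x 0))) 0 = α * (α ^ 2 - 6 * α + 4) / (16 * Real.sqrt 2) ∧
    deriv (deriv (fun x => deriv (fun y => F x y) 0)) 0 = 0 ∧
    deriv (fun x => deriv (deriv (fun y => F x y)) 0) 0 = -(α / (4 * Real.sqrt 2)) :=
  stmt8_general α w hw F hF
end

section
/- For all real numbers A > 0 and B > 0, the improper integral ∫₀^∞ (A·x² + B·x)^{−3/4} dx converges and equals (Γ(1/4)·Γ(1/2)/Γ(3/4)) · A^{−1/4} · B^{−1/2}. Moreover ∫_{−∞}^{−B/A} (A·x² + B·x)^{−3/4} dx converges and has the same value, so the sum of the two integrals equals 2√π·(Γ(1/4)/Γ(3/4))·A^{−1/4}·B^{−1/2}. -/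
open Real MeasureTheory

/-!
With `y = (A / B) x` the quadratic becomes `A x² + B x = (B² / A) · y (1 + y)`, so the integral over
`(0, ∞)` is a constant times `∫₀^∞ y ^ (-s) (1 + y) ^ (-s) dy`. The substitution `y = u / (1 - u)`
turns the latter into Euler's Beta integral `B(1 - s, 2s - 1)`, which converges for `1/2 < s < 1`;
here `s = 3/4`. The reflection `x ↦ -B/A - x` exchanges the two roots of the quadratic, hence fixes
it, and carries `(0, ∞)` onto `(-∞, -B/A)`.
-/

section BetaIntegral

variable {a b u : ℝ}

lemma ofReal_rpow_mul_one_sub_rpow (a b : ℝ) (hu : u ∈ Set.Icc 0 1) :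
    ((u ^ (a - 1) * (1 - u) ^ (b - 1) : ℝ) : ℂ)
      = (u : ℂ) ^ ((a : ℂ) - 1) * (1 - (u : ℂ)) ^ ((b : ℂ) - 1) := by
  rw [Complex.ofReal_mul, Complex.ofReal_cpow hu.1, Complex.ofReal_cpow (sub_nonneg.2 hu.2)]
  push_cast
  rfl

lemma integrableOn_rpow_mul_one_sub_rpow (ha : 0 < a) (hb : 0 < b) :
    IntegrableOn (fun u : ℝ => u ^ (a - 1) * (1 - u) ^ (b - 1)) (Set.Ioo 0 1) := by
  have h := Complex.betaIntegral_convergent (u := a) (v := b) (by simpa) (by simpa)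
  rw [intervalIntegrable_iff_integrableOn_Ioo_of_le zero_le_one,
    ← integrableOn_congr_fun (fun u hu => ofReal_rpow_mul_one_sub_rpow a b
      (Set.Ioo_subset_Icc_self hu)) measurableSet_Ioo] at h
  exact h.re

lemma integral_rpow_mul_one_sub_rpow (ha : 0 < a) (hb : 0 < b) :
    ∫ u in Set.Ioo (0 : ℝ) 1, u ^ (a - 1) * (1 - u) ^ (b - 1) = ProbabilityTheory.beta a b := by
  rw [ProbabilityTheory.beta_eq_betaIntegralReal a b ha hb, Complex.betaIntegral,
    intervalIntegral.integral_of_le zero_le_one, integral_Ioc_eq_integral_Ioo,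
    ← setIntegral_congr_fun measurableSet_Ioo (fun u hu => ofReal_rpow_mul_one_sub_rpow a b
      (Set.Ioo_subset_Icc_self hu)), integral_complex_ofReal, Complex.ofReal_re]

lemma image_div_one_sub_Ioo : (fun u : ℝ => u / (1 - u)) '' Set.Ioo 0 1 = Set.Ioi 0 := by
  ext y
  constructor
  · rintro ⟨u, ⟨hu₀, hu₁⟩, rfl⟩
    exact div_pos hu₀ (sub_pos.2 hu₁)
  · intro (hy : 0 < y)
    refine ⟨y / (1 + y), ⟨by positivity, (div_lt_one (by positivity)).2 (by linarith)⟩, ?_⟩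
    have h : 1 - y / (1 + y) = 1 / (1 + y) := by field_simp; ring
    simp only [h]
    field_simp

lemma monotoneOn_div_one_sub : MonotoneOn (fun u : ℝ => u / (1 - u)) (Set.Iio 1) := by
  intro u (hu : u < 1) v (hv : v < 1) huv
  rw [div_le_div_iff₀ (sub_pos.2 hu) (sub_pos.2 hv)]
  linarith

lemma hasDerivAt_div_one_sub (hu : u ≠ 1) :
    HasDerivAt (fun u : ℝ => u / (1 - u)) (1 / (1 - u) ^ 2) u := by
  refine ((hasDerivAt_id' u).fun_div ((hasDerivAt_id' u).const_sub 1)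
    (sub_ne_zero.2 hu.symm)).congr_deriv ?_
  ring

lemma inv_sq_mul_rpow_div_one_sub (a b : ℝ) (hu : u ∈ Set.Ioo 0 1) :
    1 / (1 - u) ^ 2 * ((u / (1 - u)) ^ (a - 1) * (1 + u / (1 - u)) ^ (-(a + b)))
      = u ^ (a - 1) * (1 - u) ^ (b - 1) := by
  have hw : 0 < 1 - u := sub_pos.2 hu.2
  have h_add : 1 + u / (1 - u) = (1 - u)⁻¹ := by field_simp; ring
  have h_exp : (1 - u) ^ (b - 1) = (1 - u) ^ (a + b) / ((1 - u) ^ 2 * (1 - u) ^ (a - 1)) := by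
    rw [← rpow_natCast, ← rpow_add hw, ← rpow_sub hw]
    congr 1
    push_cast
    ring
  rw [h_add, inv_rpow hw.le, rpow_neg hw.le, inv_inv, div_rpow hu.1.le hw.le, h_exp]
  field_simp

lemma integrableOn_rpow_mul_one_add_rpow (ha : 0 < a) (hb : 0 < b) :
    IntegrableOn (fun y : ℝ => y ^ (a - 1) * (1 + y) ^ (-(a + b))) (Set.Ioi 0) := by
  rw [← image_div_one_sub_Ioo, integrableOn_image_iff_integrableOn_deriv_smul_of_monotoneOn
    measurableSet_Ioo (fun u hu => (hasDerivAt_div_one_sub hu.2.ne).hasDerivWithinAt)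
    (monotoneOn_div_one_sub.mono fun u hu => hu.2)]
  exact (integrableOn_congr_fun (fun u hu => inv_sq_mul_rpow_div_one_sub a b hu)
    measurableSet_Ioo).2 (integrableOn_rpow_mul_one_sub_rpow ha hb)

lemma integral_rpow_mul_one_add_rpow (ha : 0 < a) (hb : 0 < b) :
    ∫ y in Set.Ioi (0 : ℝ), y ^ (a - 1) * (1 + y) ^ (-(a + b)) = ProbabilityTheory.beta a b := by
  rw [← image_div_one_sub_Ioo, integral_image_eq_integral_deriv_smul_of_monotoneOn
    measurableSet_Ioo (fun u hu => (hasDerivAt_div_one_sub hu.2.ne).hasDerivWithinAt)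
    (monotoneOn_div_one_sub.mono fun u hu => hu.2), ← integral_rpow_mul_one_sub_rpow ha hb]
  exact setIntegral_congr_fun measurableSet_Ioo fun u hu => inv_sq_mul_rpow_div_one_sub a b hu

end BetaIntegral

section Reflection

variable {E : Type*} [NormedAddCommGroup E]

lemma integrableOn_Iio_iff_integrableOn_Ioi_comp_sub_left (f : ℝ → E) (c : ℝ) :
    IntegrableOn f (Set.Iio c) ↔ IntegrableOn (fun x => f (c - x)) (Set.Ioi 0) := by
  simpa [Function.comp_def] using ((volume.measurePreserving_sub_left c).integrableOn_comp_preimage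
    (measurableEmbedding_subLeft c) (f := f) (s := Set.Iio c)).symm

lemma integral_Iio_eq_integral_Ioi_comp_sub_left [NormedSpace ℝ E] (f : ℝ → E) (c : ℝ) :
    ∫ x in Set.Iio c, f x = ∫ x in Set.Ioi 0, f (c - x) := by
  simpa using ((volume.measurePreserving_sub_left c).setIntegral_preimage_emb
    (measurableEmbedding_subLeft c) f (Set.Iio c)).symm

lemma quadratic_reflect {K : Type*} [Field K] {A : K} (hA : A ≠ 0) (B x : K) :
    A * (-B / A - x) ^ 2 + B * (-B / A - x) = A * x ^ 2 + B * x := by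
  field_simp
  ring

end Reflection

section Quadratic

variable {A B s : ℝ}

lemma quadratic_rpow_eq (hA : 0 < A) (hB : 0 < B) (s : ℝ) {x : ℝ} (hx : x ∈ Set.Ioi 0) :
    (A * x ^ 2 + B * x) ^ (-s)
      = (B ^ 2 / A) ^ (-s) * ((A / B * x) ^ (-s) * (1 + A / B * x) ^ (-s)) := by
  have hx₀ : 0 < x := hx
  rw [← mul_rpow (by positivity) (by positivity), ← mul_rpow (by positivity) (by positivity)]
  congr 1
  field_simp
  ring

lemma integrableOn_Ioi_quadratic_rpow (hA : 0 < A) (hB : 0 < B) (hs : 1 / 2 < s) (hs' : s < 1) :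
    IntegrableOn (fun x : ℝ => (A * x ^ 2 + B * x) ^ (-s)) (Set.Ioi 0) := by
  have h_beta : IntegrableOn (fun y : ℝ => y ^ (-s) * (1 + y) ^ (-s)) (Set.Ioi 0) := by
    have h := integrableOn_rpow_mul_one_add_rpow (a := 1 - s) (b := 2 * s - 1)
      (by linarith) (by linarith)
    rwa [sub_sub_cancel_left, show 1 - s + (2 * s - 1) = s by ring] at h
  rw [integrableOn_congr_fun (fun x hx => quadratic_rpow_eq hA hB s hx) measurableSet_Ioi]
  refine Integrable.const_mul ((integrableOn_Ioi_comp_mul_left_iff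
    (fun y : ℝ => y ^ (-s) * (1 + y) ^ (-s)) 0 (div_pos hA hB)).2 ?_) _
  rwa [mul_zero]

lemma integral_Ioi_quadratic_rpow (hA : 0 < A) (hB : 0 < B) (hs : 1 / 2 < s) (hs' : s < 1) :
    ∫ x in Set.Ioi (0 : ℝ), (A * x ^ 2 + B * x) ^ (-s)
      = Real.Gamma (1 - s) * Real.Gamma (2 * s - 1) / Real.Gamma s
          * A ^ (s - 1) * B ^ (1 - 2 * s) := by
  have h_beta : ∫ y in Set.Ioi (0 : ℝ), y ^ (-s) * (1 + y) ^ (-s)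
      = Real.Gamma (1 - s) * Real.Gamma (2 * s - 1) / Real.Gamma s := by
    have h := integral_rpow_mul_one_add_rpow (a := 1 - s) (b := 2 * s - 1)
      (by linarith) (by linarith)
    rwa [ProbabilityTheory.beta, sub_sub_cancel_left,
      show 1 - s + (2 * s - 1) = s by ring] at h
  have h_const : (B ^ 2 / A) ^ (-s) * (A / B)⁻¹ = A ^ (s - 1) * B ^ (1 - 2 * s) := by
    rw [rpow_neg (by positivity), div_rpow (by positivity) hA.le, ← rpow_natCast_mul hB.le,
      rpow_sub_one hA.ne', rpow_sub hB, rpow_one]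
    push_cast
    field_simp
  rw [setIntegral_congr_fun measurableSet_Ioi fun x hx => quadratic_rpow_eq hA hB s hx,
    integral_const_mul, integral_comp_mul_left_Ioi (fun y => y ^ (-s) * (1 + y) ^ (-s)) 0
      (div_pos hA hB), mul_zero, h_beta, smul_eq_mul, ← mul_assoc, h_const]
  ring

end Quadratic

theorem stmt9_general (A B s : ℝ) (hA : 0 < A) (hB : 0 < B) (hs : 1 / 2 < s) (hs' : s < 1) :
    IntegrableOn (fun x : ℝ => (A * x ^ 2 + B * x) ^ (-s)) (Set.Ioi 0) ∧
    (∫ x in Set.Ioi (0 : ℝ), (A * x ^ 2 + B * x) ^ (-s))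
      = Real.Gamma (1 - s) * Real.Gamma (2 * s - 1) / Real.Gamma s
          * A ^ (s - 1) * B ^ (1 - 2 * s) ∧
    IntegrableOn (fun x : ℝ => (A * x ^ 2 + B * x) ^ (-s)) (Set.Iio (-B / A)) ∧
    (∫ x in Set.Iio (-B / A), (A * x ^ 2 + B * x) ^ (-s))
      = Real.Gamma (1 - s) * Real.Gamma (2 * s - 1) / Real.Gamma s
          * A ^ (s - 1) * B ^ (1 - 2 * s) ∧
    (∫ x in Set.Ioi (0 : ℝ), (A * x ^ 2 + B * x) ^ (-s))
        + (∫ x in Set.Iio (-B / A), (A * x ^ 2 + B * x) ^ (-s))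
      = 2 * Real.Gamma (2 * s - 1) * (Real.Gamma (1 - s) / Real.Gamma s)
          * A ^ (s - 1) * B ^ (1 - 2 * s) := by
  rw [integrableOn_Iio_iff_integrableOn_Ioi_comp_sub_left,
    integral_Iio_eq_integral_Ioi_comp_sub_left]
  simp only [quadratic_reflect hA.ne']
  have h_int := integrableOn_Ioi_quadratic_rpow hA hB hs hs'
  have h_val := integral_Ioi_quadratic_rpow hA hB hs hs'
  refine ⟨h_int, h_val, h_int, h_val, ?_⟩
  rw [h_val]
  ring

/-- For `A, B > 0`, the integral `∫₀^∞ (Ax² + Bx)^(−3/4) dx` converges and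
equals `Γ(1/4)Γ(1/2)/Γ(3/4) · A^(−1/4) · B^(−1/2)`; the integral over `(−∞, −B/A)`
converges and has the same value, and the sum of the two equals
`2√π·(Γ(1/4)/Γ(3/4))·A^(−1/4)·B^(−1/2)`. -/
theorem stmt9 (A B : ℝ) (hA : 0 < A) (hB : 0 < B) :
    IntegrableOn (fun x : ℝ => (A * x ^ 2 + B * x) ^ (-(3 / 4) : ℝ)) (Set.Ioi 0) ∧
    (∫ x in Set.Ioi (0 : ℝ), (A * x ^ 2 + B * x) ^ (-(3 / 4) : ℝ))
      = Real.Gamma (1 / 4) * Real.Gamma (1 / 2) / Real.Gamma (3 / 4)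
          * A ^ (-(1 / 4) : ℝ) * B ^ (-(1 / 2) : ℝ) ∧
    IntegrableOn (fun x : ℝ => (A * x ^ 2 + B * x) ^ (-(3 / 4) : ℝ)) (Set.Iio (-B / A)) ∧
    (∫ x in Set.Iio (-B / A), (A * x ^ 2 + B * x) ^ (-(3 / 4) : ℝ))
      = Real.Gamma (1 / 4) * Real.Gamma (1 / 2) / Real.Gamma (3 / 4)
          * A ^ (-(1 / 4) : ℝ) * B ^ (-(1 / 2) : ℝ) ∧
    (∫ x in Set.Ioi (0 : ℝ), (A * x ^ 2 + B * x) ^ (-(3 / 4) : ℝ))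
        + (∫ x in Set.Iio (-B / A), (A * x ^ 2 + B * x) ^ (-(3 / 4) : ℝ))
      = 2 * Real.sqrt π * (Real.Gamma (1 / 4) / Real.Gamma (3 / 4))
          * A ^ (-(1 / 4) : ℝ) * B ^ (-(1 / 2) : ℝ) := by
  have h := stmt9_general A B (3 / 4) hA hB (by norm_num) (by norm_num)
  norm_num [Real.Gamma_one_half_eq] at h ⊢
  exact h
end

section
/- Let d ≥ 1 be an integer, 0 < α < 2, and ξ ∈ ℝ^d. Then: (i) the function z ↦ (1 − cos(ξ·z))/‖z‖^{d+α} is Lebesgue integrable on ℝ^d (with ‖·‖ the Euclidean norm); (ii) for every h > 0 the series m_h(ξ) = h^d·∑_{z ∈ ℤ^d, z ≠ 0} (1 − cos(h·ξ·z))/‖h·z‖^{d+α} converges; and (iii) m_h(ξ) → ∫_{ℝ^d} (1 − cos(ξ·z))/‖z‖^{d+α} dz as h → 0+. -/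
open Real MeasureTheory

/-!
Rounding to the nearest point of `hℤ^d` turns `h^d ∑_z f (hz)` into the integral over `ℝ^d` of the
step function equal to `f (hz)` on the cube of side `h` centred at `hz`, so convergence of the
lattice sums follows from dominated convergence. For `f z = (1 - cos (ξ·z)) / |z|^(d+α)` a
majorant is a multiple of `min (‖x‖², 1) / ‖x‖^(d+α)`: this profile is integrable because
`0 < α < 2`, and it is stable under rounding because `f` vanishes at the origin, while off the
central cube a point and its rounding have comparable norms.
-/

open Filter Set
open scoped Topology

section Lattice

variable {ι : Type*}

/-- The point `hz` of the lattice `hℤ^ι` with integer coordinates `z`. -/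
def latticePoint (h : ℝ) (z : ι → ℤ) : ι → ℝ := fun i => h * z i

/-- The integer coordinates of the point of `hℤ^ι` nearest to `x`. Ties are rounded up, so that the
fibres are the half-open cubes of side `h` centred at the lattice points. -/
noncomputable def latticeIndex (h : ℝ) (x : ι → ℝ) : ι → ℤ := fun i => round (x i / h)

lemma abs_sub_mul_round_div_le {h : ℝ} (hh : 0 < h) (t : ℝ) : |t - h * round (t / h)| ≤ h / 2 :=
  calc |t - h * round (t / h)| = |h * (t / h - round (t / h))| := by
        rw [mul_sub, mul_div_cancel₀ _ hh.ne']
    _ = h * |t / h - round (t / h)| := by rw [abs_mul, abs_of_pos hh]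
    _ ≤ h * (1 / 2) := by gcongr; exact abs_sub_round _
    _ = h / 2 := by ring

lemma tendsto_latticePoint_latticeIndex (x : ι → ℝ) :
    Tendsto (fun h : ℝ => latticePoint h (latticeIndex h x)) (𝓝[>] 0) (𝓝 x) := by
  have half : Tendsto (fun h : ℝ => h / 2) (𝓝[>] 0) (𝓝 0) :=
    ((continuous_id.div_const 2).tendsto' 0 0 (zero_div 2)).mono_left nhdsWithin_le_nhds
  refine tendsto_pi_nhds.2 fun i => tendsto_iff_norm_sub_tendsto_zero.2 <|
    squeeze_zero' (.of_forall fun _ => norm_nonneg _) ?_ half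
  filter_upwards [self_mem_nhdsWithin] with h hh
  rw [norm_sub_rev]
  exact abs_sub_mul_round_div_le hh (x i)

lemma measurable_latticeIndex (h : ℝ) : Measurable (latticeIndex (ι := ι) h) := by
  refine measurable_pi_lambda _ fun i => ?_
  simp only [latticeIndex, round_eq]
  exact Int.measurable_floor.comp (by fun_prop)

lemma latticeIndex_preimage_singleton {h : ℝ} (hh : 0 < h) (z : ι → ℤ) :
    latticeIndex h ⁻¹' {z} = univ.pi fun i => Ico (h * (z i - 1 / 2)) (h * (z i + 1 / 2)) := by
  ext x
  simp only [mem_preimage, mem_singleton_iff, funext_iff, latticeIndex, round_eq_iff, mem_univ_pi,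
    mem_Ico, le_div_iff₀' hh, div_lt_iff₀' hh]

variable [Fintype ι]

lemma map_latticeIndex_volume {h : ℝ} (hh : 0 < h) :
    Measure.map (latticeIndex h) volume =
      ENNReal.ofReal h ^ Fintype.card ι • (Measure.count : Measure (ι → ℤ)) := by
  refine Measure.ext_of_singleton fun z => ?_
  have side (i : ι) : h * (z i + 1 / 2) - h * (z i - 1 / 2) = h := by ring
  rw [Measure.map_apply (measurable_latticeIndex h) (measurableSet_singleton z),
    latticeIndex_preimage_singleton hh, volume_pi_pi]
  simp only [Real.volume_Ico, side, Finset.prod_const, Finset.card_univ, Measure.smul_apply,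
    Measure.count_singleton, smul_eq_mul, mul_one]

section Sums

variable {E : Type*} [NormedAddCommGroup E]

lemma integrable_comp_latticeIndex_iff {h : ℝ} (hh : 0 < h) {F : (ι → ℤ) → E} :
    Integrable (fun x => F (latticeIndex h x)) ↔ Summable fun z => ‖F z‖ := by
  have hc : ENNReal.ofReal h ^ Fintype.card ι ≠ 0 := by simp [hh]
  have hF : AEStronglyMeasurable F (Measure.map (latticeIndex h) volume) :=
    (StronglyMeasurable.of_discrete).aestronglyMeasurable
  rw [← integrable_count_iff, ← integrable_smul_measure (μ := Measure.count) hc (by simp),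
    ← map_latticeIndex_volume hh]
  exact (integrable_map_measure hF (measurable_latticeIndex h).aemeasurable).symm

variable [NormedSpace ℝ E] [CompleteSpace E]

lemma integral_comp_latticeIndex {h : ℝ} (hh : 0 < h) {F : (ι → ℤ) → E}
    (hF : Summable fun z => ‖F z‖) :
    ∫ x, F (latticeIndex h x) = h ^ Fintype.card ι • ∑' z, F z := by
  rw [← integral_map (measurable_latticeIndex h).aemeasurable
      (StronglyMeasurable.of_discrete).aestronglyMeasurable,
    map_latticeIndex_volume hh, integral_smul_measure,
    integral_countable (integrable_count_iff.2 hF)]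
  simp [hh.le]

end Sums

lemma norm_sub_latticePoint_latticeIndex_le {h : ℝ} (hh : 0 < h) (x : ι → ℝ) :
    ‖x - latticePoint h (latticeIndex h x)‖ ≤ h / 2 :=
  (pi_norm_le_iff_of_nonneg (by positivity)).2 fun i => abs_sub_mul_round_div_le hh (x i)

lemma abs_le_norm_latticePoint (h : ℝ) {z : ι → ℤ} (hz : z ≠ 0) : |h| ≤ ‖latticePoint h z‖ := by
  obtain ⟨i, hi⟩ := Function.ne_iff.1 hz
  have one_le : (1 : ℝ) ≤ |(z i : ℝ)| := mod_cast Int.one_le_abs hi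
  calc |h| ≤ |h| * |(z i : ℝ)| := le_mul_of_one_le_right (abs_nonneg h) one_le
    _ = ‖latticePoint h z i‖ := (abs_mul h _).symm
    _ ≤ ‖latticePoint h z‖ := norm_le_pi_norm _ i

section DominatedConvergence

variable {E : Type*} [NormedAddCommGroup E] {f : (ι → ℝ) → E} {b : (ι → ℝ) → ℝ}

lemma aestronglyMeasurable_comp_latticePoint_latticeIndex (f : (ι → ℝ) → E) (h : ℝ) :
    AEStronglyMeasurable fun x => f (latticePoint h (latticeIndex h x)) :=
  ((StronglyMeasurable.of_discrete (f := fun z => f (latticePoint h z))).comp_measurable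
    (measurable_latticeIndex h)).aestronglyMeasurable

lemma summable_norm_latticePoint_of_le {h : ℝ} (hh : 0 < h) (hb : Integrable b)
    (hfb : ∀ᵐ x, ‖f (latticePoint h (latticeIndex h x))‖ ≤ b x) :
    Summable fun z => ‖f (latticePoint h z)‖ :=
  (integrable_comp_latticeIndex_iff hh (F := fun z => f (latticePoint h z))).1 <|
    hb.mono' (aestronglyMeasurable_comp_latticePoint_latticeIndex f h) hfb

theorem tendsto_smul_tsum_latticePoint_of_dominated_convergence [NormedSpace ℝ E] [CompleteSpace E]
    (hb : Integrable b)
    (hfb : ∀ᶠ h : ℝ in 𝓝[>] 0, ∀ᵐ x, ‖f (latticePoint h (latticeIndex h x))‖ ≤ b x)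
    (hf : ∀ᵐ x, ContinuousAt f x) :
    Tendsto (fun h : ℝ => h ^ Fintype.card ι • ∑' z, f (latticePoint h z)) (𝓝[>] 0)
      (𝓝 (∫ x, f x)) := by
  have steps : Tendsto (fun h => ∫ x, f (latticePoint h (latticeIndex h x))) (𝓝[>] 0)
      (𝓝 (∫ x, f x)) :=
    tendsto_integral_filter_of_dominated_convergence b
      (.of_forall (aestronglyMeasurable_comp_latticePoint_latticeIndex f)) hfb hb <|
      hf.mono fun x hx => hx.tendsto.comp (tendsto_latticePoint_latticeIndex x)
  refine steps.congr' ?_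
  filter_upwards [self_mem_nhdsWithin, hfb] with h hh hbound
  exact integral_comp_latticeIndex hh (F := fun z => f (latticePoint h z))
    (summable_norm_latticePoint_of_le hh hb hbound)

end DominatedConvergence

end Lattice

section Majorant

/-- The radial profile `min (r², 1) / r ^ s`, which dominates the integrand of the symbol of the
fractional Laplacian; it takes the value `0` at `r = 0`. -/
noncomputable def levyMajorant (s r : ℝ) : ℝ := min (r ^ 2) 1 / r ^ s

@[simp]
lemma levyMajorant_zero (s : ℝ) : levyMajorant s 0 = 0 := by simp [levyMajorant]

lemma levyMajorant_nonneg (s : ℝ) {r : ℝ} (hr : 0 ≤ r) : 0 ≤ levyMajorant s r := by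
  unfold levyMajorant
  positivity

lemma levyMajorant_le_of_comparable {s c q r : ℝ} (hs : 0 ≤ s) (hc : 1 ≤ c) (hr : 0 < r)
    (hq : 0 ≤ q) (hqr : q ≤ c * r) (hrq : r ≤ c * q) :
    levyMajorant s q ≤ c ^ 2 * c ^ s * levyMajorant s r := by
  have c_pos : 0 < c := by linarith
  have num : min (q ^ 2) 1 ≤ c ^ 2 * min (r ^ 2) 1 := by
    rw [mul_min_of_nonneg _ _ (sq_nonneg c), ← mul_pow, mul_one]
    exact min_le_min (by gcongr) (one_le_pow₀ hc)
  have den : r ^ s / c ^ s ≤ q ^ s := by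
    rw [div_le_iff₀' (by positivity), ← mul_rpow c_pos.le hq]
    gcongr
  calc levyMajorant s q ≤ c ^ 2 * min (r ^ 2) 1 / (r ^ s / c ^ s) := by
        unfold levyMajorant
        gcongr
    _ = c ^ 2 * c ^ s * levyMajorant s r := by
        unfold levyMajorant
        field_simp

lemma pow_mul_levyMajorant (s : ℝ) (n : ℕ) {r : ℝ} (hr : 0 < r) :
    r ^ n * levyMajorant s r = levyMajorant (s - n) r := by
  rw [levyMajorant, levyMajorant, rpow_sub_natCast hr.ne']
  field_simp

lemma integrableOn_Ioi_levyMajorant {s : ℝ} (h1 : 1 < s) (h3 : s < 3) :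
    IntegrableOn (levyMajorant s) (Ioi 0) := by
  rw [← Ioc_union_Ioi_eq_Ioi zero_le_one]
  refine IntegrableOn.union ?_ ?_
  · have near : IntegrableOn (fun r : ℝ => r ^ (2 - s)) (Ioc 0 1) :=
      (integrableOn_Ioc_iff_integrableOn_Ioo (by simp)).2
        ((intervalIntegral.integrableOn_Ioo_rpow_iff one_pos).2 (by linarith))
    refine near.congr_fun (fun r hr => ?_) measurableSet_Ioc
    beta_reduce
    rw [levyMajorant, min_eq_left (pow_le_one₀ hr.1.le hr.2), rpow_sub hr.1, rpow_two]
  · have far : IntegrableOn (fun r : ℝ => r ^ (-s)) (Ioi 1) :=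
      integrableOn_Ioi_rpow_of_lt (by linarith) one_pos
    refine far.congr_fun (fun r (hr : 1 < r) => ?_) measurableSet_Ioi
    beta_reduce
    rw [levyMajorant, min_eq_right (one_le_pow₀ hr.le), rpow_neg (by linarith), one_div]

lemma integrable_levyMajorant_norm {E : Type*} [NormedAddCommGroup E] [NormedSpace ℝ E]
    [FiniteDimensional ℝ E] [Nontrivial E] [MeasurableSpace E] [BorelSpace E] (μ : Measure E)
    [μ.IsAddHaarMeasure] {s : ℝ} (hs : Module.finrank ℝ E < s) (hs' : s < Module.finrank ℝ E + 2) :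
    Integrable (fun x : E => levyMajorant s ‖x‖) μ := by
  have cast_dim : ((Module.finrank ℝ E - 1 : ℕ) : ℝ) = Module.finrank ℝ E - 1 := by
    rw [Nat.cast_sub Module.finrank_pos, Nat.cast_one]
  rw [integrable_fun_norm_addHaar μ (f := levyMajorant s)]
  refine (integrableOn_Ioi_levyMajorant (s := s - (Module.finrank ℝ E - 1 : ℕ)) ?_ ?_).congr_fun
    (fun r hr => (pow_mul_levyMajorant s _ hr).symm) measurableSet_Ioi
  · rw [cast_dim]; linarith
  · rw [cast_dim]; linarith

lemma levyMajorant_norm_latticePoint_le {ι : Type*} [Fintype ι] {s h : ℝ} (hs : 0 ≤ s) (hh : 0 < h)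
    (x : ι → ℝ) :
    levyMajorant s ‖latticePoint h (latticeIndex h x)‖ ≤ 2 ^ 2 * 2 ^ s * levyMajorant s ‖x‖ := by
  have dist_le := norm_sub_latticePoint_latticeIndex_le hh x
  rcases eq_or_ne (latticeIndex h x) 0 with hz | hz
  · have point_zero : latticePoint h (latticeIndex h x) = 0 := by
      ext i
      simp [latticePoint, hz]
    rw [point_zero, norm_zero, levyMajorant_zero]
    exact mul_nonneg (by positivity) (levyMajorant_nonneg s (norm_nonneg x))
  · have le_norm := (le_abs_self h).trans (abs_le_norm_latticePoint h hz)
    have upper := norm_le_norm_add_norm_sub x (latticePoint h (latticeIndex h x))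
    have lower := norm_le_norm_add_norm_sub' x (latticePoint h (latticeIndex h x))
    exact levyMajorant_le_of_comparable hs one_le_two (by linarith) (norm_nonneg _) (by linarith)
      (by linarith)

end Majorant

section Symbol

lemma one_sub_cos_le_mul_min {t K r : ℝ} (ht : |t| ≤ K * r) :
    1 - cos t ≤ (2 + K ^ 2) * min (r ^ 2) 1 := by
  have sq_le : t ^ 2 ≤ K ^ 2 * r ^ 2 := by
    rw [← mul_pow]
    exact sq_le_sq' (abs_le.1 ht).1 (abs_le.1 ht).2
  rw [mul_min_of_nonneg _ _ (by positivity)]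
  refine le_min ?_ ?_
  · linarith [one_sub_sq_div_two_le_cos (x := t), sq_nonneg r, sq_nonneg t]
  · linarith [neg_one_le_cos t, sq_nonneg K]

variable {ι : Type*} [Fintype ι]

lemma norm_le_sqrt_sum_sq (z : ι → ℝ) : ‖z‖ ≤ √(∑ i, z i ^ 2) :=
  (pi_norm_le_iff_of_nonneg (sqrt_nonneg _)).2 fun i =>
    abs_le_sqrt (Finset.single_le_sum (fun j _ => sq_nonneg (z j)) (Finset.mem_univ i))

lemma abs_sum_mul_le_sum_abs_mul_norm (ξ z : ι → ℝ) : |∑ i, ξ i * z i| ≤ (∑ i, |ξ i|) * ‖z‖ :=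
  calc |∑ i, ξ i * z i| ≤ ∑ i, |ξ i * z i| := Finset.abs_sum_le_sum_abs _ _
    _ ≤ ∑ i, |ξ i| * ‖z‖ := Finset.sum_le_sum fun i _ => by
        rw [abs_mul]
        gcongr
        exact norm_le_pi_norm z i
    _ = (∑ i, |ξ i|) * ‖z‖ := (Finset.sum_mul _ _ _).symm

/-- The integrand `(1 - cos (ξ·z)) / |z| ^ s` of the Fourier symbol of the fractional Laplacian
of order `s - card ι`, with `|z|` the Euclidean norm. The bare type `ι → ℝ` carries the sup norm, so
`|z|` is spelled out. The value at `z = 0` is `0`. -/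
noncomputable def symbolIntegrand (s : ℝ) (ξ z : ι → ℝ) : ℝ :=
  (1 - cos (∑ i, ξ i * z i)) / √(∑ i, z i ^ 2) ^ s

lemma symbolIntegrand_nonneg (s : ℝ) (ξ z : ι → ℝ) : 0 ≤ symbolIntegrand s ξ z :=
  div_nonneg (sub_nonneg.2 (cos_le_one _)) (rpow_nonneg (sqrt_nonneg _) _)

lemma measurable_symbolIntegrand (s : ℝ) (ξ : ι → ℝ) : Measurable (symbolIntegrand s ξ) := by
  unfold symbolIntegrand
  fun_prop

lemma continuousAt_symbolIntegrand (s : ℝ) (ξ : ι → ℝ) {z : ι → ℝ} (hz : z ≠ 0) :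
    ContinuousAt (symbolIntegrand s ξ) z := by
  have norm_pos : 0 < √(∑ i, z i ^ 2) := (norm_pos_iff.2 hz).trans_le (norm_le_sqrt_sum_sq z)
  have norm_cont : ContinuousAt (fun z : ι → ℝ => √(∑ i, z i ^ 2)) z :=
    Continuous.continuousAt (by fun_prop)
  have num_cont : ContinuousAt (fun z : ι → ℝ => 1 - cos (∑ i, ξ i * z i)) z :=
    Continuous.continuousAt (by fun_prop)
  exact num_cont.div (norm_cont.rpow_const (.inl norm_pos.ne'))
    (rpow_pos_of_pos norm_pos s).ne'

lemma symbolIntegrand_le_levyMajorant {s : ℝ} (hs : 0 ≤ s) (ξ z : ι → ℝ) :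
    symbolIntegrand s ξ z ≤ (2 + (∑ i, |ξ i|) ^ 2) * levyMajorant s ‖z‖ := by
  rcases eq_or_ne z 0 with rfl | hz
  · simp [symbolIntegrand]
  have num_le := one_sub_cos_le_mul_min (abs_sum_mul_le_sum_abs_mul_norm ξ z)
  have den_le : ‖z‖ ^ s ≤ √(∑ i, z i ^ 2) ^ s :=
    rpow_le_rpow (norm_nonneg z) (norm_le_sqrt_sum_sq z) hs
  rw [symbolIntegrand, levyMajorant, ← mul_div_assoc]
  exact div_le_div₀ (by positivity) num_le (rpow_pos_of_pos (norm_pos_iff.2 hz) s) den_le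

lemma norm_symbolIntegrand_latticePoint_le {s h : ℝ} (hs : 0 ≤ s) (hh : 0 < h) (ξ x : ι → ℝ) :
    ‖symbolIntegrand s ξ (latticePoint h (latticeIndex h x))‖ ≤
      (2 + (∑ i, |ξ i|) ^ 2) * (2 ^ 2 * 2 ^ s) * levyMajorant s ‖x‖ := by
  rw [norm_of_nonneg (symbolIntegrand_nonneg _ _ _), mul_assoc]
  refine (symbolIntegrand_le_levyMajorant hs ξ _).trans ?_
  gcongr
  exact levyMajorant_norm_latticePoint_le hs hh x

variable [Nonempty ι] {s : ℝ}

lemma integrable_const_mul_levyMajorant_norm_pi (hs : Fintype.card ι < s)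
    (hs' : s < Fintype.card ι + 2) (c : ℝ) :
    Integrable fun x : ι → ℝ => c * levyMajorant s ‖x‖ :=
  (integrable_levyMajorant_norm volume (by simpa using hs) (by simpa using hs')).const_mul c

theorem integrable_symbolIntegrand (hs : Fintype.card ι < s) (hs' : s < Fintype.card ι + 2)
    (ξ : ι → ℝ) : Integrable (symbolIntegrand s ξ) := by
  have s_nonneg : 0 ≤ s := (Nat.cast_nonneg _).trans hs.le
  refine (integrable_const_mul_levyMajorant_norm_pi hs hs' (2 + (∑ i, |ξ i|) ^ 2)).mono'
    (measurable_symbolIntegrand s ξ).aestronglyMeasurable (.of_forall fun z => ?_)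
  rw [norm_of_nonneg (symbolIntegrand_nonneg s ξ z)]
  exact symbolIntegrand_le_levyMajorant s_nonneg ξ z

theorem summable_symbolIntegrand_latticePoint (hs : Fintype.card ι < s)
    (hs' : s < Fintype.card ι + 2) (ξ : ι → ℝ) {h : ℝ} (hh : 0 < h) :
    Summable fun z => symbolIntegrand s ξ (latticePoint h z) := by
  have s_nonneg : 0 ≤ s := (Nat.cast_nonneg _).trans hs.le
  exact (summable_norm_latticePoint_of_le hh
    (integrable_const_mul_levyMajorant_norm_pi hs hs' _)
    (.of_forall (norm_symbolIntegrand_latticePoint_le s_nonneg hh ξ))).of_norm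

theorem tendsto_tsum_symbolIntegrand_latticePoint (hs : Fintype.card ι < s)
    (hs' : s < Fintype.card ι + 2) (ξ : ι → ℝ) :
    Tendsto (fun h : ℝ => h ^ Fintype.card ι * ∑' z, symbolIntegrand s ξ (latticePoint h z))
      (𝓝[>] 0) (𝓝 (∫ z, symbolIntegrand s ξ z)) := by
  have s_nonneg : 0 ≤ s := (Nat.cast_nonneg _).trans hs.le
  refine tendsto_smul_tsum_latticePoint_of_dominated_convergence
    (integrable_const_mul_levyMajorant_norm_pi hs hs' ((2 + (∑ i, |ξ i|) ^ 2) * (2 ^ 2 * 2 ^ s)))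
    ?_ ?_
  · filter_upwards [self_mem_nhdsWithin] with h hh
    exact .of_forall (norm_symbolIntegrand_latticePoint_le s_nonneg hh ξ)
  · filter_upwards [Measure.ae_ne volume 0] with x hx
    exact continuousAt_symbolIntegrand s ξ hx

end Symbol

/-- For `d ≥ 1`, `0 < α < 2`, `ξ ∈ ℝ^d`:
(i) `z ↦ (1 − cos(ξ·z))/‖z‖^(d+α)` is Lebesgue integrable on `ℝ^d`;
(ii) for every `h > 0` the lattice sum
`T h z = (1 − cos(h ξ·z))/‖hz‖^(d+α)` over `z ∈ ℤ^d` is summable (the `z = 0` term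
being `0` by the junk convention `0/0 = 0`, so this is summability over `z ≠ 0`);
(iii) `h^d · ∑' z, T h z → ∫ (1 − cos(ξ·z))/‖z‖^(d+α) dz` as `h → 0+`. -/
theorem stmt14 (d : ℕ) (hd : 1 ≤ d) (α : ℝ) (hα1 : 0 < α) (hα2 : α < 2)
    (ξ : Fin d → ℝ)
    (g : (Fin d → ℝ) → ℝ)
    (hg : ∀ z, g z = (1 - Real.cos (∑ i, ξ i * z i))
        / Real.sqrt (∑ i, z i ^ 2) ^ ((d : ℝ) + α))
    (T : ℝ → (Fin d → ℤ) → ℝ)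
    (hT : ∀ h z, T h z = (1 - Real.cos (∑ i, h * ξ i * (z i : ℝ)))
        / Real.sqrt (∑ i, (h * (z i : ℝ)) ^ 2) ^ ((d : ℝ) + α)) :
    Integrable g ∧
    (∀ h : ℝ, 0 < h → Summable (T h)) ∧
    Filter.Tendsto (fun h : ℝ => h ^ d * ∑' z, T h z)
      (nhdsWithin 0 (Set.Ioi 0)) (nhds (∫ z, g z)) := by
  have : Nonempty (Fin d) := ⟨⟨0, hd⟩⟩
  have lower : (Fintype.card (Fin d) : ℝ) < d + α := by simpa using hα1
  have upper : (d : ℝ) + α < Fintype.card (Fin d) + 2 := by simpa using hα2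
  have g_eq : g = symbolIntegrand (d + α) ξ := funext hg
  have T_eq (h : ℝ) : T h = fun z => symbolIntegrand (d + α) ξ (latticePoint h z) := by
    ext z
    simp only [hT, symbolIntegrand, latticePoint, mul_left_comm, mul_assoc]
  simp only [g_eq, T_eq]
  refine ⟨integrable_symbolIntegrand lower upper ξ,
    fun h hh => summable_symbolIntegrand_latticePoint lower upper ξ hh, ?_⟩
  simpa only [Fintype.card_fin] using tendsto_tsum_symbolIntegrand_latticePoint lower upper ξ
end

section
/- Let 1 < α < 2. Define D(a,α) = (α·a² − 4a + 2 − α)² − 4a²·α·(2−α), and for a ∈ [(2−α)/α, 1] define B(a,α) = (4a − α·a² − (2−α) − √(D(a,α)))/(2aα). Then for every a ∈ [(2−α)/α, 1]: (i) D(a,α) ≥ 0, so B(a,α) is well defined; (ii) h(a, B(a,α), α) = 0; (iii) B((2−α)/α, α) = B(1, α) = (2−α)/α; and (iv) with a_m = ((2−α)/α)^{1/2} ∈ [(2−α)/α, 1], one has B(a_m, α) ≥ 1 − (1+√2)(α−1). -/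
open Real

/-! Put `c = (2 - α) / α`. Dividing `h(a, b, α)` by `α a b` turns `h = 0` into
`(a + c / a) + (b + c / b) = 2 (1 + c)`. Hence `b` is a root of `x² - p x + c` with
`p = 2 (1 + c) - (a + c / a)`, and `B(a, α)` is the smaller one. On `[c, 1]` the function
`a + c / a` is at most `1 + c`, its value at both endpoints, so `p² ≥ (1 + c)² ≥ 4 c`, and at the
endpoints the roots are `1` and `c`. At the minimum point `s = √c` of `a + c / a` the roots are
`1 + s² - s ± (1 - s) √(1 + s²)`, and since `α - 1 = (1 - s²) / (1 + s²)`, the bound reduces to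
`(1 + s²) (s + √(1 + s²)) ≤ (1 + s) (1 + √2)`. -/

/-- The smaller real root of the monic quadratic `x² - p x + q`, to which the branch `B` reduces.
The formula gives `p / 2` when there is no real root. -/
noncomputable def smallerRoot (p q : ℝ) : ℝ := (p - √(p ^ 2 - 4 * q)) / 2

theorem smallerRoot_sq_sub_mul_add_eq_zero {p q : ℝ} (h : 4 * q ≤ p ^ 2) :
    smallerRoot p q ^ 2 - p * smallerRoot p q + q = 0 := by
  have hsq : √(p ^ 2 - 4 * q) ^ 2 = p ^ 2 - 4 * q := sq_sqrt (sub_nonneg.2 h)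
  rw [smallerRoot]
  linear_combination hsq / 4

theorem smallerRoot_eq_of_add_eq_of_mul_eq {p q x y : ℝ} (hyx : y ≤ x) (hadd : x + y = p)
    (hmul : x * y = q) : smallerRoot p q = y := by
  have hdiscr : p ^ 2 - 4 * q = (x - y) ^ 2 := by rw [← hadd, ← hmul]; ring
  rw [smallerRoot, hdiscr, sqrt_sq (sub_nonneg.2 hyx), ← hadd]
  ring

/-- For a point `(a, b)` of the degeneracy curve with parameter `c = (2 - α) / α`, the value of
`b + c / b`; equivalently, the sum of the two roots `b` over `a`, whose product is `c`. -/
noncomputable def branchSum (c a : ℝ) : ℝ := 2 * (1 + c) - (a + c / a)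

section branchSum

variable {c : ℝ}

theorem branchSum_one : branchSum c 1 = 1 + c := by
  rw [branchSum]; ring

theorem branchSum_self (hc : c ≠ 0) : branchSum c c = 1 + c := by
  rw [branchSum, div_self hc]; ring

theorem branchSum_sqrt : branchSum c √c = 2 * (1 + c - √c) := by
  rw [branchSum, div_sqrt]; ring

theorem one_add_le_branchSum {a : ℝ} (ha₀ : 0 < a) (ha : a ∈ Set.Icc c 1) :
    1 + c ≤ branchSum c a := by
  have hprod : 0 ≤ (a - c) * (1 - a) := mul_nonneg (sub_nonneg.2 ha.1) (sub_nonneg.2 ha.2)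
  have hdiff : branchSum c a - (1 + c) = (a - c) * (1 - a) / a := by
    rw [branchSum]; field_simp; ring
  exact sub_nonneg.1 (hdiff ▸ div_nonneg hprod ha₀.le)

theorem four_mul_le_branchSum_sq {a : ℝ} (hc : 0 < c) (ha : a ∈ Set.Icc c 1) :
    4 * c ≤ branchSum c a ^ 2 :=
  calc 4 * c = 4 * 1 * c := by ring
    _ ≤ (1 + c) ^ 2 := four_mul_le_sq_add 1 c
    _ ≤ branchSum c a ^ 2 :=
      pow_le_pow_left₀ (by positivity) (one_add_le_branchSum (hc.trans_le ha.1) ha) 2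

theorem smallerRoot_one_add (hc : c ≤ 1) : smallerRoot (1 + c) c = c :=
  smallerRoot_eq_of_add_eq_of_mul_eq hc rfl (one_mul c)

theorem smallerRoot_branchSum_sqrt (hc₀ : 0 ≤ c) (hc₁ : c ≤ 1) :
    smallerRoot (branchSum c √c) c = 1 + c - √c - (1 - √c) * √(1 + c) := by
  have hgap : 0 ≤ (1 - √c) * √(1 + c) :=
    mul_nonneg (sub_nonneg.2 (sqrt_le_one.2 hc₁)) (sqrt_nonneg _)
  have hs : √c ^ 2 = c := sq_sqrt hc₀
  have hr : √(1 + c) ^ 2 = 1 + c := sq_sqrt (by positivity)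
  refine smallerRoot_eq_of_add_eq_of_mul_eq
    (x := 1 + c - √c + (1 - √c) * √(1 + c)) (by linarith) ?_ ?_
  · rw [branchSum_sqrt]; ring
  · linear_combination (-(1 - √c) ^ 2) * hr - c * hs

theorem one_add_mul_sqrt_add_sqrt_le (hc₁ : c ≤ 1) :
    (1 + c) * (√c + √(1 + c)) ≤ (1 + √c) * (1 + √2) := by
  have hc_le : c ≤ √c := le_sqrt_self_iff.2 hc₁
  have hs : √c ≤ 1 := sqrt_le_one.2 hc₁
  have hr : √(1 + c) ≤ √2 := sqrt_le_sqrt (by linarith)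
  gcongr

theorem le_smallerRoot_branchSum_sqrt (hc₀ : 0 ≤ c) (hc₁ : c ≤ 1) :
    1 - (1 + √2) * ((1 - c) / (1 + c)) ≤ smallerRoot (branchSum c √c) c := by
  have hs : √c ^ 2 = c := sq_sqrt hc₀
  have hquot : √c + √(1 + c) ≤ (1 + √c) * (1 + √2) / (1 + c) :=
    (le_div_iff₀' (by positivity)).2 (one_add_mul_sqrt_add_sqrt_le hc₁)
  have hfactor : 1 - c = (1 - √c) * (1 + √c) := by linear_combination hs
  calc 1 - (1 + √2) * ((1 - c) / (1 + c))
      = 1 - (1 - √c) * ((1 + √c) * (1 + √2) / (1 + c)) := by rw [hfactor]; ring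
    _ ≤ 1 - (1 - √c) * (√c + √(1 + c)) :=
      sub_le_sub_left
        (mul_le_mul_of_nonneg_left hquot (sub_nonneg.2 (sqrt_le_one.2 hc₁))) 1
    _ = 1 + c - √c - (1 - √c) * √(1 + c) := by linear_combination hs
    _ = smallerRoot (branchSum c √c) c := (smallerRoot_branchSum_sqrt hc₀ hc₁).symm

end branchSum

/-- The polynomial `h(a, b, α)`, whose zero set is the degeneracy set `E_α`. -/
def degeneracyPoly (α a b : ℝ) : ℝ := α * a * b * (a + b) - 4 * (a * b) + (2 - α) * (a + b)

/-- `D(a, α)`, the discriminant of `degeneracyPoly α a` as a quadratic in its last argument. -/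
def degeneracyDiscrim (α a : ℝ) : ℝ :=
  (α * a ^ 2 - 4 * a + 2 - α) ^ 2 - 4 * a ^ 2 * α * (2 - α)

/-- `B(a, α)`, the branch of the degeneracy curve given by the smaller root over `a`
(for `a` and `α` positive). -/
noncomputable def degeneracyBranch (α a : ℝ) : ℝ :=
  (4 * a - α * a ^ 2 - (2 - α) - √(degeneracyDiscrim α a)) / (2 * a * α)

section degeneracy

variable {α a : ℝ}

theorem degeneracyPoly_eq (hα : α ≠ 0) (ha : a ≠ 0) (b : ℝ) :
    degeneracyPoly α a b =
      α * a * (b ^ 2 - branchSum ((2 - α) / α) a * b + (2 - α) / α) := by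
  rw [degeneracyPoly, branchSum]
  field_simp
  ring

theorem degeneracyDiscrim_eq (hα : α ≠ 0) (ha : a ≠ 0) :
    degeneracyDiscrim α a =
      (α * a) ^ 2 * (branchSum ((2 - α) / α) a ^ 2 - 4 * ((2 - α) / α)) := by
  rw [degeneracyDiscrim, branchSum]
  field_simp
  ring

theorem degeneracyBranch_eq_smallerRoot (hα : 0 < α) (ha : 0 < a) :
    degeneracyBranch α a = smallerRoot (branchSum ((2 - α) / α) a) ((2 - α) / α) := by
  have hsum : 4 * a - α * a ^ 2 - (2 - α) = α * a * branchSum ((2 - α) / α) a := by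
    rw [branchSum]; field_simp; ring
  rw [degeneracyBranch, degeneracyDiscrim_eq hα.ne' ha.ne', sqrt_mul (sq_nonneg _),
    sqrt_sq (by positivity), hsum, smallerRoot]
  field_simp

theorem degeneracyDiscrim_nonneg (hα₀ : 0 < α) (hα₂ : α < 2)
    (ha : a ∈ Set.Icc ((2 - α) / α) 1) : 0 ≤ degeneracyDiscrim α a := by
  have hc : 0 < (2 - α) / α := div_pos (sub_pos.2 hα₂) hα₀
  rw [degeneracyDiscrim_eq hα₀.ne' (hc.trans_le ha.1).ne']
  exact mul_nonneg (sq_nonneg _) (sub_nonneg.2 (four_mul_le_branchSum_sq hc ha))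

theorem degeneracyPoly_degeneracyBranch (hα₀ : 0 < α) (hα₂ : α < 2)
    (ha : a ∈ Set.Icc ((2 - α) / α) 1) : degeneracyPoly α a (degeneracyBranch α a) = 0 := by
  have hc : 0 < (2 - α) / α := div_pos (sub_pos.2 hα₂) hα₀
  have ha₀ : 0 < a := hc.trans_le ha.1
  rw [degeneracyPoly_eq hα₀.ne' ha₀.ne', degeneracyBranch_eq_smallerRoot hα₀ ha₀,
    smallerRoot_sq_sub_mul_add_eq_zero (four_mul_le_branchSum_sq hc ha), mul_zero]

end degeneracy

/-- For `1 < α < 2`, with `D(a,α) = (αa² − 4a + 2 − α)² − 4a²α(2−α)` and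
`B(a,α) = (4a − αa² − (2−α) − √D(a,α))/(2aα)` on `[(2−α)/α, 1]`:
(i) `D(a,α) ≥ 0` there; (ii) `h(a, B(a,α), α) = 0` there; (iii) the boundary values are
`B((2−α)/α,α) = B(1,α) = (2−α)/α`; (iv) with `a_m = √((2−α)/α) ∈ [(2−α)/α, 1]`, one has
`B(a_m,α) ≥ 1 − (1+√2)(α−1)`. -/
theorem stmt17 (α : ℝ) (hα1 : 1 < α) (hα2 : α < 2)
    (h : ℝ → ℝ → ℝ)
    (hh : ∀ a b, h a b = α * a * b * (a + b) - 4 * (a * b) + (2 - α) * (a + b))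
    (D : ℝ → ℝ)
    (hD : ∀ a, D a = (α * a ^ 2 - 4 * a + 2 - α) ^ 2 - 4 * a ^ 2 * α * (2 - α))
    (B : ℝ → ℝ)
    (hB : ∀ a, B a = (4 * a - α * a ^ 2 - (2 - α) - Real.sqrt (D a)) / (2 * a * α)) :
    (∀ a ∈ Set.Icc ((2 - α) / α) 1, 0 ≤ D a) ∧
    (∀ a ∈ Set.Icc ((2 - α) / α) 1, h a (B a) = 0) ∧
    B ((2 - α) / α) = (2 - α) / α ∧
    B 1 = (2 - α) / α ∧
    Real.sqrt ((2 - α) / α) ∈ Set.Icc ((2 - α) / α) 1 ∧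
    1 - (1 + Real.sqrt 2) * (α - 1) ≤ B (Real.sqrt ((2 - α) / α)) := by
  obtain rfl : h = degeneracyPoly α := funext₂ hh
  obtain rfl : D = degeneracyDiscrim α := funext hD
  obtain rfl : B = degeneracyBranch α := funext hB
  have hα₀ : 0 < α := one_pos.trans hα1
  have hc₀ : 0 < (2 - α) / α := div_pos (sub_pos.2 hα2) hα₀
  have hc₁ : (2 - α) / α ≤ 1 := (div_le_one hα₀).2 (by linarith)
  have hα_sub_one : α - 1 = (1 - (2 - α) / α) / (1 + (2 - α) / α) := by field_simp; ring
  refine ⟨fun a => degeneracyDiscrim_nonneg hα₀ hα2,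
    fun a => degeneracyPoly_degeneracyBranch hα₀ hα2, ?_, ?_,
    ⟨le_sqrt_self_iff.2 hc₁, sqrt_le_one.2 hc₁⟩, ?_⟩
  · rw [degeneracyBranch_eq_smallerRoot hα₀ hc₀, branchSum_self hc₀.ne', smallerRoot_one_add hc₁]
  · rw [degeneracyBranch_eq_smallerRoot hα₀ one_pos, branchSum_one, smallerRoot_one_add hc₁]
  · rw [degeneracyBranch_eq_smallerRoot hα₀ (sqrt_pos.2 hc₀), hα_sub_one]
    exact le_smallerRoot_branchSum_sqrt hc₀.le hc₁
end
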